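/- Let e be an even integer with e ≥ 2 and let n be a positive integer. Then ν₂(∑_{k=0}^{n} binom(n, k)^e) = s₂(n). -/

import Mathlib

/-- `s2 n` is the number of ones in the binary expansion of `n`. -/
def s2 (n : ℕ) : ℕ := (Nat.digits 2 n).sum

/-!
Write `M e i = ∑ k, C(n, k) ^ e * C(k, i) * C(n - k, i)`, so that `M e 0` is the power sum. The
product `C(n, k) * C(k, i) * C(n - k, i)` expands as a combination of the `C(k, l) * C(n - k, l)`,
which gives `M (e + 1) i = C(n, i) * ∑ l, C(l, i) * M e l`. The closed form of `M 1` shows that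
`2 ^ s₂(n)` divides every `M 1 i`, hence `C(n, i) * 2 ^ s₂(n)` divides `M e i` for all `e ≥ 2`.

Applying the recursion twice yields `M (e + 2) 0 = ∑ l, C(n + l, n) * M e l`. For `l > 0` the number
`C(n + l, n) * C(n, l) = C(n + l, 2 l) * C(2 l, l)` is even, so modulo `2 ^ (s₂(n) + 1)` only the
term `M e 0` survives. For even `e ≥ 2` this reduces the power sum to `M 2 0 = C(2 n, n)`, whose
`2`-adic valuation is `s₂(n)` by Kummer's theorem.
-/

open Finset

section Choose

lemma choose_mul_choose_eq_choose_mul_choose_sub {n k : ℕ} (hk : k ≤ n) (i : ℕ) :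
    n.choose k * k.choose i = n.choose i * (n - i).choose (n - k) := by
  rcases le_or_gt i k with hik | hki
  · rw [Nat.choose_mul hik, Nat.choose_symm_of_eq_add (show n - i = k - i + (n - k) by omega)]
  · rw [Nat.choose_eq_zero_of_lt hki, mul_zero, eq_comm, mul_eq_zero,
      Nat.choose_eq_zero_iff, Nat.choose_eq_zero_iff]
    omega

lemma sum_range_choose_mul_choose_mul_choose (k m i : ℕ) :
    ∑ l ∈ range (k + 1), k.choose l * m.choose l * l.choose i =
      k.choose i * (m + (k - i)).choose k := by
  rw [Nat.add_choose_eq, Nat.sum_antidiagonal_eq_sum_range_succ_mk, mul_sum]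
  refine sum_congr rfl fun l hl ↦ ?_
  rw [mul_right_comm,
    choose_mul_choose_eq_choose_mul_choose_sub (Nat.lt_succ_iff.mp (mem_range.mp hl)) i]
  ring

lemma add_choose_mul_choose_mul_choose_eq_sum (k m i : ℕ) :
    (k + m).choose k * (k.choose i * m.choose i) =
      (k + m).choose i * ∑ l ∈ range (k + 1), k.choose l * m.choose l * l.choose i := by
  rcases le_or_gt i k with hik | hki
  · have h := choose_mul_choose_eq_choose_mul_choose_sub (Nat.le_add_left m k) i
    rw [Nat.add_sub_cancel, ← Nat.choose_symm_add] at h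
    rw [sum_range_choose_mul_choose_mul_choose, show m + (k - i) = k + m - i by omega]
    linear_combination k.choose i * h
  · simp only [sum_range_choose_mul_choose_mul_choose, Nat.choose_eq_zero_of_lt hki, zero_mul,
      mul_zero]

lemma sum_range_choose_mul_choose (n i : ℕ) :
    ∑ k ∈ range (n + 1), n.choose k * k.choose i = n.choose i * 2 ^ (n - i) := by
  rcases lt_or_ge n i with hni | hin
  · rw [Nat.choose_eq_zero_of_lt hni, zero_mul]
    refine sum_eq_zero fun k hk ↦ ?_
    rw [Nat.choose_eq_zero_of_lt (n := k) (by grind), mul_zero]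
  · rw [show n + 1 = i + (n - i + 1) by omega, sum_range_add, ← Nat.sum_range_choose, mul_sum]
    have vanish : ∑ k ∈ range i, n.choose k * k.choose i = 0 :=
      sum_eq_zero fun k hk ↦ by rw [Nat.choose_eq_zero_of_lt (mem_range.mp hk), mul_zero]
    rw [vanish, zero_add]
    refine sum_congr rfl fun j _ ↦ ?_
    rw [Nat.choose_mul (Nat.le_add_right i j), Nat.add_sub_cancel_left]

lemma two_dvd_add_choose_mul_choose (n : ℕ) {l : ℕ} (hl : 0 < l) :
    2 ∣ (n + l).choose n * n.choose l := by
  have h := Nat.choose_mul (n := n + l) (k := 2 * l) (s := l) (by omega)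
  rw [Nat.add_sub_cancel, show 2 * l - l = l by omega, ← Nat.choose_symm_add] at h
  rw [← h]
  exact (Nat.two_dvd_centralBinom_of_one_le hl).mul_left _

end Choose

section Valuation

lemma padicValNat_eq_of_modEq {p a b : ℕ} [Fact p.Prime] (hb : b ≠ 0)
    (h : a ≡ b [MOD p ^ (padicValNat p b + 1)]) : padicValNat p a = padicValNat p b := by
  have not_dvd : ¬ p ^ (padicValNat p b + 1) ∣ a := by
    rw [h.dvd_iff dvd_rfl]
    exact pow_succ_padicValNat_not_dvd hb
  have dvd : p ^ padicValNat p b ∣ a := by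
    rw [h.dvd_iff (pow_dvd_pow p (Nat.le_succ _))]
    exact pow_padicValNat_dvd
  have ha : a ≠ 0 := by
    rintro rfl
    exact not_dvd (dvd_zero _)
  rw [padicValNat_dvd_iff_le ha] at dvd not_dvd
  omega

lemma s2_two_mul (n : ℕ) : s2 (2 * n) = s2 n := by
  rcases n.eq_zero_or_pos with rfl | hn
  · rfl
  · rw [s2, Nat.digits_base_mul one_lt_two hn, List.sum_cons, zero_add, s2]

lemma s2_add_le (a b : ℕ) : s2 (a + b) ≤ s2 a + b := by
  have legendre (m : ℕ) : padicValNat 2 m.factorial + s2 m = m := by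
    have h := sub_one_mul_padicValNat_factorial (p := 2) m
    have hle := Nat.digit_sum_le 2 m
    unfold s2
    omega
  have mono : padicValNat 2 a.factorial ≤ padicValNat 2 (a + b).factorial :=
    (padicValNat_dvd_iff_le (Nat.factorial_ne_zero _)).mp
      (pow_padicValNat_dvd.trans (Nat.factorial_dvd_factorial (Nat.le_add_right a b)))
  have ha := legendre a
  have hab := legendre (a + b)
  omega

lemma padicValNat_two_centralBinom (n : ℕ) : padicValNat 2 n.centralBinom = s2 n := by
  have kummer := sub_one_mul_padicValNat_choose_eq_sub_sum_digits' (p := 2) (k := n) (n := n)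
  have hdouble := s2_two_mul n
  rw [← two_mul, ← Nat.centralBinom_eq_two_mul_choose] at kummer
  unfold s2 at hdouble ⊢
  omega

lemma two_pow_s2_dvd_centralBinom (n : ℕ) : 2 ^ s2 n ∣ n.centralBinom := by
  rw [← padicValNat_two_centralBinom]
  exact pow_padicValNat_dvd

end Valuation

/-- The sum of `C(n, k) ^ e` over `0 ≤ k ≤ n`, weighted by `C(k, i) * C(n - k, i)`. Taking `i = 0`
gives the power sum of the binomial coefficients; the weights make a recursion in `e` possible. -/
def choosePowMoment (n e i : ℕ) : ℕ :=
  ∑ k ∈ range (n + 1), n.choose k ^ e * (k.choose i * (n - k).choose i)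

namespace choosePowMoment

variable (n e i : ℕ)

lemma index_zero : choosePowMoment n e 0 = ∑ k ∈ range (n + 1), n.choose k ^ e := by
  simp [choosePowMoment]

lemma exponent_succ : choosePowMoment n (e + 1) i =
    n.choose i * ∑ l ∈ range (n + 1), l.choose i * choosePowMoment n e l := by
  have expand {k : ℕ} (hk : k ≤ n) : n.choose k * (k.choose i * (n - k).choose i) =
      n.choose i * ∑ l ∈ range (n + 1), k.choose l * (n - k).choose l * l.choose i := by
    have h := add_choose_mul_choose_mul_choose_eq_sum k (n - k) i
    rw [Nat.add_sub_of_le hk] at h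
    have vanish (l : ℕ) (hl : k + 1 ≤ l) : k.choose l * (n - k).choose l * l.choose i = 0 := by
      rw [Nat.choose_eq_zero_of_lt hl, zero_mul, zero_mul]
    rw [h, eventually_constant_sum (n := n + 1) vanish (by omega)]
  simp only [choosePowMoment, mul_sum]
  rw [sum_comm]
  refine sum_congr rfl fun k hk ↦ ?_
  rw [pow_succ, mul_assoc, expand (Nat.lt_succ_iff.mp (mem_range.mp hk)), mul_sum, mul_sum]
  exact sum_congr rfl fun l _ ↦ by ring

lemma exponent_one :
    choosePowMoment n 1 i = n.choose (2 * i) * i.centralBinom * 2 ^ (n - 2 * i) := by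
  calc choosePowMoment n 1 i
      = ∑ k ∈ range (n + 1), n.choose i * ((n - i).choose k * k.choose i) := by
        rw [choosePowMoment, ← sum_range_reflect]
        refine sum_congr rfl fun k hk ↦ ?_
        have hk : k ≤ n := Nat.lt_succ_iff.mp (mem_range.mp hk)
        have h := choose_mul_choose_eq_choose_mul_choose_sub (Nat.sub_le n k) i
        rw [Nat.sub_sub_self hk] at h
        rw [Nat.add_sub_cancel, Nat.sub_sub_self hk, pow_one, ← mul_assoc, h, mul_assoc]
    _ = n.choose i * ((n - i).choose i * 2 ^ (n - i - i)) := by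
        have vanish (k : ℕ) (hk : n - i + 1 ≤ k) : (n - i).choose k * k.choose i = 0 := by
          rw [Nat.choose_eq_zero_of_lt hk, zero_mul]
        rw [← mul_sum, ← sum_range_choose_mul_choose, eventually_constant_sum vanish (by omega)]
    _ = n.choose (2 * i) * i.centralBinom * 2 ^ (n - 2 * i) := by
        rw [Nat.centralBinom_eq_two_mul_choose, Nat.choose_mul (by omega),
          show 2 * i - i = i by omega, show n - i - i = n - 2 * i by omega, mul_assoc]

lemma exponent_two_index_zero : choosePowMoment n 2 0 = n.centralBinom := by
  rw [index_zero, Nat.sum_range_choose_sq, Nat.centralBinom_eq_two_mul_choose]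

lemma exponent_add_two_index_zero : choosePowMoment n (e + 2) 0 =
    ∑ l ∈ range (n + 1), (n + l).choose n * choosePowMoment n e l := by
  calc choosePowMoment n (e + 2) 0
      = ∑ i ∈ range (n + 1), ∑ l ∈ range (n + 1),
          n.choose i * l.choose i * choosePowMoment n e l := by
        simp only [exponent_succ n (e + 1), exponent_succ n e, Nat.choose_zero_right, one_mul,
          mul_sum, mul_assoc]
    _ = ∑ l ∈ range (n + 1), (n + l).choose n * choosePowMoment n e l := by
        rw [sum_comm]
        refine sum_congr rfl fun l _ ↦ ?_
        have vandermonde := sum_range_choose_mul_choose_mul_choose n l 0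
        simp only [Nat.choose_zero_right, mul_one, one_mul, Nat.sub_zero] at vandermonde
        rw [← sum_mul, vandermonde, add_comm]

lemma two_pow_s2_dvd_exponent_one : 2 ^ s2 n ∣ choosePowMoment n 1 i := by
  rw [exponent_one]
  rcases lt_or_ge n (2 * i) with hni | hin
  · simp only [Nat.choose_eq_zero_of_lt hni, zero_mul, dvd_zero]
  · have hs2 : s2 n ≤ s2 i + (n - 2 * i) := by
      have h := s2_add_le (2 * i) (n - 2 * i)
      rwa [Nat.add_sub_of_le hin, s2_two_mul] at h
    calc 2 ^ s2 n ∣ 2 ^ s2 i * 2 ^ (n - 2 * i) := by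
          rw [← pow_add]
          exact pow_dvd_pow 2 hs2
      _ ∣ n.choose (2 * i) * i.centralBinom * 2 ^ (n - 2 * i) :=
          mul_dvd_mul_right ((two_pow_s2_dvd_centralBinom i).mul_left _) _

lemma two_pow_s2_dvd_exponent_succ : 2 ^ s2 n ∣ choosePowMoment n (e + 1) i := by
  induction e generalizing i with
  | zero => exact two_pow_s2_dvd_exponent_one n i
  | succ e ih =>
    rw [exponent_succ]
    exact (dvd_sum fun l _ ↦ (ih l).mul_left _).mul_left _

lemma choose_mul_two_pow_s2_dvd_exponent_add_two :
    n.choose i * 2 ^ s2 n ∣ choosePowMoment n (e + 2) i := by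
  rw [exponent_succ]
  exact mul_dvd_mul_left _ (dvd_sum fun l _ ↦ (two_pow_s2_dvd_exponent_succ n e l).mul_left _)

lemma exponent_add_four_index_zero_modEq :
    choosePowMoment n (e + 4) 0 ≡ choosePowMoment n (e + 2) 0 [MOD 2 ^ (s2 n + 1)] := by
  have tail_dvd : 2 ^ (s2 n + 1) ∣
      ∑ l ∈ range n, (n + (l + 1)).choose n * choosePowMoment n (e + 2) (l + 1) := by
    refine dvd_sum fun l _ ↦ ?_
    calc 2 ^ (s2 n + 1) = 2 * 2 ^ s2 n := pow_succ' 2 _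
      _ ∣ (n + (l + 1)).choose n * n.choose (l + 1) * 2 ^ s2 n :=
          mul_dvd_mul_right (two_dvd_add_choose_mul_choose n l.succ_pos) _
      _ = (n + (l + 1)).choose n * (n.choose (l + 1) * 2 ^ s2 n) := mul_assoc _ _ _
      _ ∣ (n + (l + 1)).choose n * choosePowMoment n (e + 2) (l + 1) :=
          mul_dvd_mul_left _ (choose_mul_two_pow_s2_dvd_exponent_add_two n e (l + 1))
  rw [exponent_add_two_index_zero n (e + 2), sum_range_succ', add_zero, Nat.choose_self, one_mul]
  simpa only [zero_add] using
    ((Nat.modEq_zero_iff_dvd.mpr tail_dvd).add_right (choosePowMoment n (e + 2) 0))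

lemma even_exponent_index_zero_modEq_centralBinom (r : ℕ) :
    choosePowMoment n (2 * r + 2) 0 ≡ n.centralBinom [MOD 2 ^ (s2 n + 1)] := by
  induction r with
  | zero => rw [mul_zero, zero_add, exponent_two_index_zero]
  | succ r ih => exact (exponent_add_four_index_zero_modEq n (2 * r)).trans ih

end choosePowMoment

theorem stmt_10 (e n : ℕ) (he : Even e) (he2 : 2 ≤ e) (hn : 0 < n) :
    padicValNat 2 (∑ k ∈ Finset.range (n + 1), (n.choose k) ^ e) = s2 n := by
  obtain ⟨r, rfl⟩ : ∃ r, e = 2 * r + 2 := by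
    obtain ⟨q, rfl⟩ := he
    exact ⟨q - 1, by omega⟩
  have hmod := choosePowMoment.even_exponent_index_zero_modEq_centralBinom n r
  rw [choosePowMoment.index_zero, ← padicValNat_two_centralBinom] at hmod
  rw [padicValNat_eq_of_modEq n.centralBinom_ne_zero hmod, padicValNat_two_centralBinom]
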